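/- Let K be a convex body in ℝⁿ (a nonempty, compact, convex set with nonempty interior). The Lebesgue measure of K equals the Lebesgue measure of its central symmetrization (1/2) • (K + (-K)) if and only if K is centrally symmetric with respect to some point p ∈ ℝⁿ, i.e., there exists p such that for all x, x ∈ K if and only if 2p - x ∈ K. -/

import Mathlib

open scoped Pointwise

open MeasureTheory

open scoped ENNReal Topology

open Filter Set

/-! Equality of the measures is equality in the Brunn–Minkowski inequality for `K` and `L = -K`.
Hence the constant weights `1` on `K`, on `L` and on the set of midpoints `M = 2⁻¹ • (K + L)` attain
equality in the Prékopa–Leindler inequality, and perturbing them yields linear information.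

* Perturbing to `1 + ε a`, `1 + ε b`, `1 + ε c` and comparing first-order terms gives
  `∫_K a + ∫_L b ≤ 2 ∫_M c` whenever `a x + b y ≤ 2 c ((x + y) / 2)`.
* Let `a`, `b`, `c` be the same linear functional, centred to have mean zero on `K`, on `L` and
  on `M`. The weights `(1 + ε a)²`, `(1 + ε b)²`, `(1 + ε c)²` have no first-order term, and the
  second-order terms give `∫_K a² + ∫_L b² ≤ 2 ∫_M c²`.
* By the parallelogram identity `a² + b² - (a - b)² / 2 = 2 c²`, the first inequality applied to
  `-a² + d² / 2`, `-b²`, `-c²` improves on the reverse of the second by `½ ∫_K d²`, for any function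
  `d` on `K` with `d² ≤ (a - b)²`. So `d = 0`; taking `d = max (a - sup_L b) 0` shows that `a` on
  `K` never exceeds the supremum of `b` on `L`.

By Hahn–Banach, moving the centroid of `K` to that of `L` carries `K` into `L`; by symmetry it
carries `K` onto `L`. For `L = -K` this is central symmetry.
-/

section RealLine

theorem volume_add_volume_le_volume_add_of_isCompact {A B : Set ℝ} (hA : IsCompact A)
    (hB : IsCompact B) (hA_ne : A.Nonempty) (hB_ne : B.Nonempty) :
    volume A + volume B ≤ volume (A + B) := by
  obtain ⟨a, ha, ha_max⟩ := hA.exists_isGreatest hA_ne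
  obtain ⟨b, hb, hb_min⟩ := hB.exists_isLeast hB_ne
  have inter_subset : (b +ᵥ A) ∩ (a +ᵥ B) ⊆ {a + b} := by
    rintro _ ⟨⟨x, hx, rfl⟩, ⟨y, hy, hxy⟩⟩
    have hxa := ha_max hx
    have hby := hb_min hy
    simp only [vadd_eq_add] at hxy
    simp only [vadd_eq_add, mem_singleton_iff]
    linarith
  calc volume A + volume B = volume (b +ᵥ A) + volume (a +ᵥ B) := by simp only [measure_vadd]
    _ = volume ((b +ᵥ A) ∪ (a +ᵥ B)) :=
      (measure_union₀ (hB.vadd a).measurableSet.nullMeasurableSet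
        (measure_mono_null inter_subset (measure_singleton _))).symm
    _ ≤ volume (A + B) := by
      refine measure_mono (union_subset ?_ (vadd_set_subset_add ha))
      rw [add_comm]
      exact vadd_set_subset_add hb

theorem volume_add_volume_le_volume_add {A B : Set ℝ} (hA : MeasurableSet A)
    (hB : MeasurableSet B) (hA_ne : A.Nonempty) (hB_ne : B.Nonempty) :
    volume A + volume B ≤ volume (A + B) := by
  obtain ⟨a, ha⟩ := hA_ne
  obtain ⟨b, hb⟩ := hB_ne
  rw [hA.measure_eq_iSup_isCompact, hB.measure_eq_iSup_isCompact]
  simp only [iSup_and']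
  refine ENNReal.biSup_add_biSup_le' ⟨∅, by simp⟩ ⟨∅, by simp⟩ ?_
  rintro A' ⟨hA'A, hA'⟩ B' ⟨hB'B, hB'⟩
  calc volume A' + volume B' ≤ volume (insert a A') + volume (insert b B') := by
        gcongr <;> exact subset_insert _ _
    _ ≤ volume (insert a A' + insert b B') :=
      volume_add_volume_le_volume_add_of_isCompact (hA'.insert a) (hB'.insert b)
        (insert_nonempty _ _) (insert_nonempty _ _)
    _ ≤ volume (A + B) := by
      gcongr <;> exact insert_subset ‹_› ‹_›

theorem lintegral_eq_lintegral_meas_ofReal_lt {α : Type*} [MeasurableSpace α] (μ : Measure α)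
    [SFinite μ] {f : α → ℝ≥0∞} (hf : Measurable f) :
    ∫⁻ x, f x ∂μ = ∫⁻ t in Ioi (0 : ℝ), μ {x | ENNReal.ofReal t < f x} := by
  have volume_lt (y : ℝ≥0∞) : volume ({t | ENNReal.ofReal t < y} ∩ Ioi 0) = y := by
    induction y with
    | top => simp
    | coe y =>
      have : {t : ℝ | ENNReal.ofReal t < y} ∩ Ioi 0 = Ioo 0 (y : ℝ) := by
        ext t
        rw [mem_inter_iff, mem_Ioo, mem_Ioi, and_comm]
        refine and_congr_right fun ht => ?_
        rw [mem_ofPred_eq, ← ENNReal.ofReal_coe_nnreal,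
          ENNReal.ofReal_lt_ofReal_iff_of_nonneg ht.le]
      simp [this]
  have measurableSet_lt_apply : MeasurableSet {p : α × ℝ | ENNReal.ofReal p.2 < f p.1} :=
    measurableSet_lt (by fun_prop) (by fun_prop)
  calc ∫⁻ x, f x ∂μ
      = ∫⁻ x, (volume.restrict (Ioi 0)) {t | ENNReal.ofReal t < f x} ∂μ := by
        refine lintegral_congr fun x => ?_
        rw [Measure.restrict_apply (measurableSet_lt (by fun_prop) measurable_const), volume_lt]
    _ = μ.prod (volume.restrict (Ioi 0)) {p | ENNReal.ofReal p.2 < f p.1} :=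
        (Measure.prod_apply measurableSet_lt_apply).symm
    _ = ∫⁻ t in Ioi (0 : ℝ), μ {x | ENNReal.ofReal t < f x} :=
        Measure.prod_apply_symm measurableSet_lt_apply

theorem lintegral_add_lintegral_le_of_min_le_midpoint {f g h : ℝ → ℝ≥0∞} (hf : Measurable f)
    (hg : Measurable g) (hh : Measurable h) (sup_eq : ⨆ x, f x = ⨆ x, g x)
    (H : ∀ x y, min (f x) (g y) ≤ h (midpoint ℝ x y)) :
    (∫⁻ x, f x) + ∫⁻ x, g x ≤ 2 * ∫⁻ x, h x := by
  simp only [lintegral_eq_lintegral_meas_ofReal_lt volume, hf, hg, hh]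
  have antitone_meas : Antitone fun t : ℝ => volume {x | ENNReal.ofReal t < f x} :=
    fun s t hst => measure_mono fun x hx => (ENNReal.ofReal_le_ofReal hst).trans_lt hx
  rw [← lintegral_const_mul' _ _ (by simp),
    ← lintegral_add_left antitone_meas.measurable]
  refine lintegral_mono fun t => ?_
  by_cases ht : ENNReal.ofReal t < ⨆ x, f x
  · have add_subset : {x | ENNReal.ofReal t < f x} + {y | ENNReal.ofReal t < g y} ⊆
        (2⁻¹ * ·) ⁻¹' {z | ENNReal.ofReal t < h z} := by
      rintro _ ⟨x, hx, y, hy, rfl⟩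
      have := (lt_min hx hy).trans_le (H x y)
      rwa [midpoint_eq_smul_add, invOf_eq_inv] at this
    calc _ ≤ volume ({x | ENNReal.ofReal t < f x} + {y | ENNReal.ofReal t < g y}) :=
          volume_add_volume_le_volume_add (measurableSet_lt measurable_const hf)
            (measurableSet_lt measurable_const hg) (lt_iSup_iff.1 ht)
            (lt_iSup_iff.1 (ht.trans_eq sup_eq))
      _ ≤ volume ((2⁻¹ * ·) ⁻¹' {z | ENNReal.ofReal t < h z}) := measure_mono add_subset
      _ = 2 * volume {z | ENNReal.ofReal t < h z} := by
          rw [Real.volume_preimage_mul_left (by norm_num)]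
          norm_num
  · have hf_le (x : ℝ) : f x ≤ ENNReal.ofReal t := (le_iSup f x).trans (not_lt.1 ht)
    have hg_le (x : ℝ) : g x ≤ ENNReal.ofReal t := (le_iSup g x).trans (sup_eq ▸ not_lt.1 ht)
    simp [(hf_le _).not_gt, (hg_le _).not_gt]

theorem four_mul_le_sq_add_of_canonicallyOrderedAdd {R : Type*} [CommSemiring R] [LinearOrder R]
    [CanonicallyOrderedAdd R] (x y : R) : 4 * (x * y) ≤ (x + y) ^ 2 := by
  wlog hxy : x ≤ y generalizing x y
  · simpa only [mul_comm, add_comm] using this y x (le_of_not_ge hxy)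
  obtain ⟨d, rfl⟩ := exists_add_of_le hxy
  calc 4 * (x * (x + d)) ≤ 4 * (x * (x + d)) + d ^ 2 := le_self_add
    _ = (x + (x + d)) ^ 2 := by ring

theorem lintegral_mul_lintegral_le_sq_of_iSup_ne_top {f g h : ℝ → ℝ≥0∞} (hf : Measurable f)
    (hg : Measurable g) (hh : Measurable h) (f_bdd : ⨆ x, f x ≠ ∞) (g_bdd : ⨆ x, g x ≠ ∞)
    (H : ∀ x y, f x * g y ≤ h (midpoint ℝ x y) ^ 2) :
    (∫⁻ x, f x) * ∫⁻ x, g x ≤ (∫⁻ x, h x) ^ 2 := by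
  -- `b * f` and `a * g` have the same supremum, as the additive inequality requires.
  set a := ⨆ x, f x with ha
  set b := ⨆ x, g x with hb
  rcases eq_or_ne a 0 with a_zero | a_ne
  · simp [ENNReal.iSup_eq_zero.1 (ha.symm.trans a_zero)]
  rcases eq_or_ne b 0 with b_zero | b_ne
  · simp [ENNReal.iSup_eq_zero.1 (hb.symm.trans b_zero)]
  obtain ⟨c, hc⟩ : ∃ c : ℝ≥0∞, c ^ 2 = b * a :=
    ⟨(b * a) ^ (2⁻¹ : ℝ), by rw [← ENNReal.rpow_mul_natCast]; norm_num⟩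
  have min_le (x y : ℝ) : min (b * f x) (a * g y) ≤ c * h (midpoint ℝ x y) := by
    refine (ENNReal.pow_le_pow_left_iff two_ne_zero).1 ?_
    calc min (b * f x) (a * g y) ^ 2 ≤ (b * f x) * (a * g y) := by
          rw [sq]; exact mul_le_mul' (min_le_left _ _) (min_le_right _ _)
      _ = c ^ 2 * (f x * g y) := by rw [hc]; ring
      _ ≤ c ^ 2 * h (midpoint ℝ x y) ^ 2 := by gcongr; exact H x y
      _ = (c * h (midpoint ℝ x y)) ^ 2 := (mul_pow ..).symm
  have add_le : b * (∫⁻ x, f x) + a * ∫⁻ x, g x ≤ 2 * (c * ∫⁻ x, h x) := by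
    simp only [← lintegral_const_mul, hf, hg, hh]
    refine lintegral_add_lintegral_le_of_min_le_midpoint (by fun_prop) (by fun_prop)
      (by fun_prop) ?_ min_le
    rw [← ENNReal.mul_iSup, ← ENNReal.mul_iSup, mul_comm]
  have scaled : 4 * (b * a) * ((∫⁻ x, f x) * ∫⁻ x, g x) ≤ 4 * (b * a) * (∫⁻ x, h x) ^ 2 :=
    calc _ = 4 * ((b * ∫⁻ x, f x) * (a * ∫⁻ x, g x)) := by ring
      _ ≤ (b * (∫⁻ x, f x) + a * ∫⁻ x, g x) ^ 2 := four_mul_le_sq_add_of_canonicallyOrderedAdd _ _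
      _ ≤ (2 * (c * ∫⁻ x, h x)) ^ 2 := by gcongr
      _ = 4 * (b * a) * (∫⁻ x, h x) ^ 2 := by rw [← hc]; ring
  refine (ENNReal.mul_le_mul_iff_right ?_ ?_).1 scaled
  · simp [a_ne, b_ne]
  · finiteness

end RealLine

/-- The midpoint form of the Prékopa–Leindler inequality, as a property of the measure `μ`. Both the
hypothesis `√(f x * g y) ≤ h (midpoint ℝ x y)` and the conclusion are squared, so that no roots of
extended nonnegative reals occur. -/
def MidpointPrekopaLeindler {E : Type*} [AddCommGroup E] [Module ℝ E] [MeasurableSpace E]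
    (μ : Measure E) : Prop :=
  ∀ ⦃f g h : E → ℝ≥0∞⦄, Measurable f → Measurable g → Measurable h →
    (∀ x y, f x * g y ≤ h (midpoint ℝ x y) ^ 2) →
    (∫⁻ x, f x ∂μ) * ∫⁻ x, g x ∂μ ≤ (∫⁻ x, h x ∂μ) ^ 2

namespace MidpointPrekopaLeindler

theorem volume_real : MidpointPrekopaLeindler (volume : Measure ℝ) := by
  intro f g h hf hg hh H
  have iSup_ne_top (φ : ℝ → ℝ≥0∞) (n : ℕ) : ⨆ x, SimpleFunc.eapprox φ n x ≠ ∞ := by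
    rw [← sSup_range, ← lt_top_iff_ne_top]
    exact ((SimpleFunc.finite_range _).csSup_lt_iff (range_nonempty _)).2
      (forall_mem_range.2 (SimpleFunc.eapprox_lt_top φ n))
  have eapprox_le {φ : ℝ → ℝ≥0∞} (hφ : Measurable φ) (n : ℕ) (x : ℝ) :
      SimpleFunc.eapprox φ n x ≤ φ x :=
    SimpleFunc.iSup_eapprox_apply hφ x ▸ le_iSup (fun n => SimpleFunc.eapprox φ n x) n
  simp only [lintegral_eq_iSup_eapprox_lintegral hf, lintegral_eq_iSup_eapprox_lintegral hg,
    ENNReal.iSup_mul, ENNReal.mul_iSup, iSup_le_iff, ← SimpleFunc.lintegral_eq_lintegral]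
  exact fun i j => lintegral_mul_lintegral_le_sq_of_iSup_ne_top (SimpleFunc.measurable _)
    (SimpleFunc.measurable _) hh (iSup_ne_top _ _) (iSup_ne_top _ _)
    fun x y => (mul_le_mul' (eapprox_le hf _ _) (eapprox_le hg _ _)).trans (H x y)

variable {E F : Type*} [AddCommGroup E] [Module ℝ E] [MeasurableSpace E]
  [AddCommGroup F] [Module ℝ F] [MeasurableSpace F] {μ : Measure E} {ν : Measure F}

theorem dirac (a : E) : MidpointPrekopaLeindler (Measure.dirac a) := by
  intro f g h hf hg hh H
  simpa only [lintegral_dirac' a, hf, hg, hh, midpoint_self] using H a a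

theorem smul (hμ : MidpointPrekopaLeindler μ) (c : ℝ≥0∞) : MidpointPrekopaLeindler (c • μ) := by
  intro f g h hf hg hh H
  simp only [lintegral_smul_measure, smul_eq_mul]
  calc c * (∫⁻ x, f x ∂μ) * (c * ∫⁻ x, g x ∂μ)
      = c ^ 2 * ((∫⁻ x, f x ∂μ) * ∫⁻ x, g x ∂μ) := by ring
    _ ≤ c ^ 2 * (∫⁻ x, h x ∂μ) ^ 2 := by gcongr; exact hμ hf hg hh H
    _ = (c * ∫⁻ x, h x ∂μ) ^ 2 := (mul_pow ..).symm

theorem prod [SFinite ν] (hμ : MidpointPrekopaLeindler μ) (hν : MidpointPrekopaLeindler ν) :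
    MidpointPrekopaLeindler (μ.prod ν) := by
  intro f g h hf hg hh H
  rw [lintegral_prod _ hf.aemeasurable, lintegral_prod _ hg.aemeasurable,
    lintegral_prod _ hh.aemeasurable]
  refine hμ hf.lintegral_prod_right' hg.lintegral_prod_right' hh.lintegral_prod_right'
    fun x y => ?_
  exact hν (by fun_prop) (by fun_prop) (by fun_prop) fun u v => H (x, u) (y, v)

theorem map (hμ : MidpointPrekopaLeindler μ) (φ : E →ₗ[ℝ] F) (hφ : Measurable φ) :
    MidpointPrekopaLeindler (μ.map φ) := by
  intro f g h hf hg hh H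
  simp only [lintegral_map, hf, hg, hh, hφ]
  refine hμ (hf.comp hφ) (hg.comp hφ) (hh.comp hφ) fun x y => (H _ _).trans_eq ?_
  exact congrArg (h · ^ 2) (φ.toAffineMap.map_midpoint x y).symm

theorem volume_pi (n : ℕ) : MidpointPrekopaLeindler (volume : Measure (Fin n → ℝ)) := by
  induction n with
  | zero =>
    rw [MeasureTheory.volume_pi, Measure.pi_of_empty]
    exact dirac _
  | succ n ih =>
    have cons_measurePreserving : MeasurePreserving (Fin.consLinearEquiv ℝ fun _ => ℝ)
        (volume.prod volume) (volume : Measure (Fin (n + 1) → ℝ)) := by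
      have coe_cons : ⇑(Fin.consLinearEquiv ℝ fun _ : Fin (n + 1) => ℝ) =
          (MeasurableEquiv.piFinSuccAbove (fun _ => ℝ) 0).symm :=
        funext fun _ => (Fin.insertNth_zero' _ _).symm
      rw [coe_cons]
      exact (volume_preserving_piFinSuccAbove _ 0).symm
    rw [← cons_measurePreserving.map_eq]
    exact (volume_real.prod ih).map _ cons_measurePreserving.measurable

theorem of_isAddHaarMeasure {E : Type*} [NormedAddCommGroup E] [NormedSpace ℝ E]
    [FiniteDimensional ℝ E] [MeasurableSpace E] [BorelSpace E] (μ : Measure E)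
    [μ.IsAddHaarMeasure] : MidpointPrekopaLeindler μ := by
  let e : (Fin (Module.finrank ℝ E) → ℝ) ≃L[ℝ] E :=
    ContinuousLinearEquiv.ofFinrankEq (by simp)
  rw [Measure.isAddLeftInvariant_eq_smul μ (volume.map e)]
  exact ((volume_pi _).map e.toLinearMap e.continuous.measurable).smul _

theorem setIntegral_mul_setIntegral_le_sq (hμ : MidpointPrekopaLeindler μ) {K L M : Set E}
    (hK : MeasurableSet K) (hL : MeasurableSet L) (hM : MeasurableSet M)
    (hKLM : ∀ x ∈ K, ∀ y ∈ L, midpoint ℝ x y ∈ M) {f g h : E → ℝ}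
    (hf : Measurable f) (hg : Measurable g) (hh : Measurable h)
    (f_int : IntegrableOn f K μ) (g_int : IntegrableOn g L μ) (h_int : IntegrableOn h M μ)
    (f_nonneg : ∀ x ∈ K, 0 ≤ f x) (g_nonneg : ∀ y ∈ L, 0 ≤ g y) (h_nonneg : ∀ z ∈ M, 0 ≤ h z)
    (H : ∀ x ∈ K, ∀ y ∈ L, f x * g y ≤ h (midpoint ℝ x y) ^ 2) :
    (∫ x in K, f x ∂μ) * (∫ y in L, g y ∂μ) ≤ (∫ z in M, h z ∂μ) ^ 2 := by
  have ofReal_setIntegral {S : Set E} (hS : MeasurableSet S) {φ : E → ℝ}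
      (φ_int : IntegrableOn φ S μ) (φ_nonneg : ∀ x ∈ S, 0 ≤ φ x) :
      ENNReal.ofReal (∫ x in S, φ x ∂μ) =
        ∫⁻ x, S.indicator (fun x => ENNReal.ofReal (φ x)) x ∂μ := by
    rw [lintegral_indicator hS, ofReal_integral_eq_lintegral_ofReal φ_int
      ((ae_restrict_iff' hS).2 (.of_forall φ_nonneg))]
  have integral_h_nonneg := setIntegral_nonneg (μ := μ) hM h_nonneg
  rw [← ENNReal.ofReal_le_ofReal_iff (by positivity), ENNReal.ofReal_pow integral_h_nonneg,
    ENNReal.ofReal_mul (setIntegral_nonneg hK f_nonneg), ofReal_setIntegral hK f_int f_nonneg,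
    ofReal_setIntegral hL g_int g_nonneg, ofReal_setIntegral hM h_int h_nonneg]
  refine hμ (hf.ennreal_ofReal.indicator hK) (hg.ennreal_ofReal.indicator hL)
    (hh.ennreal_ofReal.indicator hM) fun x y => ?_
  by_cases hx : x ∈ K
  · by_cases hy : y ∈ L
    · have hxy := hKLM x hx y hy
      rw [indicator_of_mem hx, indicator_of_mem hy, indicator_of_mem hxy,
        ← ENNReal.ofReal_mul (f_nonneg x hx), ← ENNReal.ofReal_pow (h_nonneg _ hxy)]
      exact ENNReal.ofReal_le_ofReal (H x hx y hy)
    · simp [hy]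
  · simp [hx]

end MidpointPrekopaLeindler

theorem eventually_forall_one_add_mul_nonneg {X : Type*} [TopologicalSpace X] {S : Set X}
    (hS : IsCompact S) {φ : X → ℝ} (hφ : Continuous φ) :
    ∀ᶠ ε in 𝓝 (0 : ℝ), ∀ x ∈ S, 0 ≤ 1 + ε * φ x := by
  refine hS.eventually_forall_of_forall_eventually fun x _ => ?_
  have hcont : Continuous fun p : ℝ × X => 1 + p.1 * φ p.2 := by fun_prop
  filter_upwards [hcont.continuousAt.eventually (lt_mem_nhds (a := 0) (by simp))] with p hp
  exact hp.le

theorem add_le_two_mul_of_eventually_mul_le_sq {ι : Type*} {l : Filter ι} [l.NeBot] {t : ι → ℝ}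
    (ht : Tendsto t l (𝓝[>] 0)) {V A B C : ℝ} (hV : 0 < V)
    (H : ∀ᶠ i in l, (V + t i * A) * (V + t i * B) ≤ (V + t i * C) ^ 2) : A + B ≤ 2 * C := by
  have ht_zero : Tendsto t l (𝓝 0) := ht.mono_right nhdsWithin_le_nhds
  have first_order : ∀ᶠ i in l, V * (A + B) + t i * (A * B) ≤ V * (2 * C) + t i * C ^ 2 := by
    filter_upwards [H, ht.eventually self_mem_nhdsWithin] with i hi ti_pos
    refine le_of_mul_le_mul_left ?_ (mem_Ioi.1 ti_pos)
    linarith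
  have limit (P Q : ℝ) : Tendsto (fun i => P + t i * Q) l (𝓝 P) := by
    simpa using (ht_zero.mul_const Q).const_add P
  exact le_of_mul_le_mul_left (le_of_tendsto_of_tendsto (limit _ _) (limit _ _) first_order) hV

section

variable {X : Type*} [TopologicalSpace X] [T2Space X] [MeasurableSpace X] [OpensMeasurableSpace X]
  {μ : Measure X} [IsFiniteMeasureOnCompacts μ] {S : Set X} {φ : X → ℝ}

theorem setIntegral_one_add_mul (hS : IsCompact S) (hφ : Continuous φ) (ε : ℝ) :
    ∫ x in S, (1 + ε * φ x) ∂μ = μ.real S + ε * ∫ x in S, φ x ∂μ := by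
  have φ_int : IntegrableOn φ S μ := hφ.continuousOn.integrableOn_compact hS
  have one_int : IntegrableOn (fun _ => (1 : ℝ)) S μ := integrableOn_const hS.measure_ne_top
  rw [integral_add one_int (φ_int.const_mul ε), integral_const_mul, setIntegral_const,
    smul_eq_mul, mul_one]

theorem setIntegral_one_add_mul_sq (hS : IsCompact S) (hφ : Continuous φ)
    (φ_zero : ∫ x in S, φ x ∂μ = 0) (ε : ℝ) :
    ∫ x in S, (1 + ε * φ x) ^ 2 ∂μ = μ.real S + ε ^ 2 * ∫ x in S, φ x ^ 2 ∂μ := by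
  have φ_int : IntegrableOn φ S μ := hφ.continuousOn.integrableOn_compact hS
  have sq_int : IntegrableOn (fun x => φ x ^ 2) S μ :=
    (hφ.pow 2).continuousOn.integrableOn_compact hS
  calc ∫ x in S, (1 + ε * φ x) ^ 2 ∂μ
      = ∫ x in S, (1 + ε * (2 * φ x + ε * φ x ^ 2)) ∂μ := by congr 1; ext x; ring
    _ = μ.real S + ε * ∫ x in S, (2 * φ x + ε * φ x ^ 2) ∂μ :=
      setIntegral_one_add_mul hS (by fun_prop) ε
    _ = μ.real S + ε ^ 2 * ∫ x in S, φ x ^ 2 ∂μ := by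
      rw [integral_add (φ_int.const_mul 2) (sq_int.const_mul ε), integral_const_mul,
        integral_const_mul, φ_zero]
      ring

end

/-- Two compact sets of the same positive measure for which equality holds in the Brunn–Minkowski
inequality `μ K ≤ μ (2⁻¹ • (K + L))`; the set `2⁻¹ • (K + L)` consists of the midpoints of `K` and
`L`. -/
structure BrunnMinkowskiEquality {E : Type*} [TopologicalSpace E] [AddCommGroup E] [Module ℝ E]
    [MeasurableSpace E] (μ : Measure E) (K L : Set E) : Prop where
  isCompact_left : IsCompact K
  isCompact_right : IsCompact L
  measure_pos : 0 < μ K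
  measure_right : μ L = μ K
  measure_midpoints : μ ((2⁻¹ : ℝ) • (K + L)) = μ K

namespace BrunnMinkowskiEquality

variable {E : Type*} [NormedAddCommGroup E] [NormedSpace ℝ E] [MeasurableSpace E]
  {μ : Measure E} {K L : Set E}

theorem symm (hKL : BrunnMinkowskiEquality μ K L) : BrunnMinkowskiEquality μ L K where
  isCompact_left := hKL.isCompact_right
  isCompact_right := hKL.isCompact_left
  measure_pos := hKL.measure_right ▸ hKL.measure_pos
  measure_right := hKL.measure_right.symm
  measure_midpoints := by rw [add_comm, hKL.measure_midpoints, hKL.measure_right]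

theorem isCompact_midpoints (hKL : BrunnMinkowskiEquality μ K L) :
    IsCompact ((2⁻¹ : ℝ) • (K + L)) :=
  (hKL.isCompact_left.add hKL.isCompact_right).smul _

theorem measureReal_right (hKL : BrunnMinkowskiEquality μ K L) : μ.real L = μ.real K :=
  congrArg ENNReal.toReal hKL.measure_right

theorem measureReal_midpoints (hKL : BrunnMinkowskiEquality μ K L) :
    μ.real ((2⁻¹ : ℝ) • (K + L)) = μ.real K :=
  congrArg ENNReal.toReal hKL.measure_midpoints

variable [IsFiniteMeasureOnCompacts μ]

theorem measureReal_pos (hKL : BrunnMinkowskiEquality μ K L) : 0 < μ.real K :=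
  ENNReal.toReal_pos hKL.measure_pos.ne' hKL.isCompact_left.measure_ne_top

variable [BorelSpace E] {a b c : E → ℝ}

theorem setIntegral_mul_setIntegral_le_sq (hKL : BrunnMinkowskiEquality μ K L)
    (hμ : MidpointPrekopaLeindler μ) {f g h : E → ℝ}
    (hf : Continuous f) (hg : Continuous g) (hh : Continuous h)
    (f_nonneg : ∀ x ∈ K, 0 ≤ f x) (g_nonneg : ∀ y ∈ L, 0 ≤ g y)
    (h_nonneg : ∀ z ∈ (2⁻¹ : ℝ) • (K + L), 0 ≤ h z)
    (H : ∀ x ∈ K, ∀ y ∈ L, f x * g y ≤ h (midpoint ℝ x y) ^ 2) :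
    (∫ x in K, f x ∂μ) * (∫ y in L, g y ∂μ) ≤ (∫ z in (2⁻¹ : ℝ) • (K + L), h z ∂μ) ^ 2 := by
  refine hμ.setIntegral_mul_setIntegral_le_sq hKL.isCompact_left.measurableSet
    hKL.isCompact_right.measurableSet hKL.isCompact_midpoints.measurableSet
    (fun x hx y hy => ?_) hf.measurable hg.measurable hh.measurable
    (hf.continuousOn.integrableOn_compact hKL.isCompact_left)
    (hg.continuousOn.integrableOn_compact hKL.isCompact_right)
    (hh.continuousOn.integrableOn_compact hKL.isCompact_midpoints) f_nonneg g_nonneg h_nonneg H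
  rw [midpoint_eq_smul_add, invOf_eq_inv]
  exact smul_mem_smul_set (add_mem_add hx hy)

theorem integral_add_integral_le (hKL : BrunnMinkowskiEquality μ K L)
    (hμ : MidpointPrekopaLeindler μ) (ha : Continuous a) (hb : Continuous b) (hc : Continuous c)
    (H : ∀ x ∈ K, ∀ y ∈ L, a x + b y ≤ 2 * c (midpoint ℝ x y)) :
    (∫ x in K, a x ∂μ) + ∫ y in L, b y ∂μ ≤ 2 * ∫ z in (2⁻¹ : ℝ) • (K + L), c z ∂μ := by
  refine add_le_two_mul_of_eventually_mul_le_sq (t := id) (l := 𝓝[>] 0) tendsto_id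
    hKL.measureReal_pos ?_
  filter_upwards [self_mem_nhdsWithin, nhdsWithin_le_nhds <|
      eventually_forall_one_add_mul_nonneg hKL.isCompact_left ha, nhdsWithin_le_nhds <|
      eventually_forall_one_add_mul_nonneg hKL.isCompact_right hb, nhdsWithin_le_nhds <|
      eventually_forall_one_add_mul_nonneg hKL.isCompact_midpoints hc]
    with ε ε_pos a_nonneg b_nonneg c_nonneg
  have key := hKL.setIntegral_mul_setIntegral_le_sq hμ (f := fun x => 1 + ε * a x)
    (g := fun y => 1 + ε * b y) (h := fun z => 1 + ε * c z) (by fun_prop) (by fun_prop)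
    (by fun_prop) a_nonneg b_nonneg c_nonneg fun x hx y hy => by
      have am_gm := four_mul_le_sq_add (1 + ε * a x) (1 + ε * b y)
      have sum_le := mul_le_mul_of_nonneg_left (H x hx y hy) (mem_Ioi.1 ε_pos).le
      have := pow_le_pow_left₀ (add_nonneg (a_nonneg x hx) (b_nonneg y hy))
        (by linarith : _ ≤ 2 * (1 + ε * c (midpoint ℝ x y))) 2
      linarith
  rwa [setIntegral_one_add_mul hKL.isCompact_left ha,
    setIntegral_one_add_mul hKL.isCompact_right hb,
    setIntegral_one_add_mul hKL.isCompact_midpoints hc, hKL.measureReal_right,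
    hKL.measureReal_midpoints] at key

theorem integral_eq_zero_of_integral_eq_zero (hKL : BrunnMinkowskiEquality μ K L)
    (hμ : MidpointPrekopaLeindler μ) (ha : Continuous a) (hb : Continuous b) (hc : Continuous c)
    (a_zero : ∫ x in K, a x ∂μ = 0) (b_zero : ∫ y in L, b y ∂μ = 0)
    (H : ∀ x ∈ K, ∀ y ∈ L, a x + b y = 2 * c (midpoint ℝ x y)) :
    ∫ z in (2⁻¹ : ℝ) • (K + L), c z ∂μ = 0 := by
  have lower := hKL.integral_add_integral_le hμ ha hb hc fun x hx y hy => (H x hx y hy).le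
  have upper := hKL.integral_add_integral_le hμ (a := fun x => -a x) (b := fun y => -b y)
    (c := fun z => -c z) ha.neg hb.neg hc.neg fun x hx y hy => by linarith [H x hx y hy]
  simp only [integral_neg] at upper
  linarith

theorem integral_sq_add_integral_sq_le (hKL : BrunnMinkowskiEquality μ K L)
    (hμ : MidpointPrekopaLeindler μ) (ha : Continuous a) (hb : Continuous b) (hc : Continuous c)
    (a_zero : ∫ x in K, a x ∂μ = 0) (b_zero : ∫ y in L, b y ∂μ = 0)
    (H : ∀ x ∈ K, ∀ y ∈ L, a x + b y = 2 * c (midpoint ℝ x y)) :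
    (∫ x in K, a x ^ 2 ∂μ) + ∫ y in L, b y ^ 2 ∂μ ≤
      2 * ∫ z in (2⁻¹ : ℝ) • (K + L), c z ^ 2 ∂μ := by
  have c_zero := hKL.integral_eq_zero_of_integral_eq_zero hμ ha hb hc a_zero b_zero H
  -- The weights `(1 + ε * a) ^ 2` kill the first-order terms and leave a perturbation in `ε ^ 2`.
  have sq_tendsto : Tendsto (fun ε : ℝ => ε ^ 2) (𝓝[>] 0) (𝓝[>] 0) :=
    tendsto_nhdsWithin_of_tendsto_nhds_of_eventually_within _
      (((continuous_pow 2).tendsto' 0 0 (by simp)).mono_left nhdsWithin_le_nhds)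
      (eventually_mem_nhdsWithin.mono fun ε hε => pow_pos (mem_Ioi.1 hε) 2)
  refine add_le_two_mul_of_eventually_mul_le_sq sq_tendsto hKL.measureReal_pos ?_
  filter_upwards [nhdsWithin_le_nhds <|
      eventually_forall_one_add_mul_nonneg hKL.isCompact_left ha, nhdsWithin_le_nhds <|
      eventually_forall_one_add_mul_nonneg hKL.isCompact_right hb]
    with ε a_nonneg b_nonneg
  have key := hKL.setIntegral_mul_setIntegral_le_sq hμ (f := fun x => (1 + ε * a x) ^ 2)
    (g := fun y => (1 + ε * b y) ^ 2) (h := fun z => (1 + ε * c z) ^ 2) (by fun_prop)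
    (by fun_prop) (by fun_prop) (fun _ _ => sq_nonneg _) (fun _ _ => sq_nonneg _)
    (fun _ _ => sq_nonneg _) fun x hx y hy => by
      have am_gm := four_mul_le_sq_add (1 + ε * a x) (1 + ε * b y)
      have sum_eq : (1 + ε * a x) + (1 + ε * b y) = 2 * (1 + ε * c (midpoint ℝ x y)) := by
        linear_combination ε * H x hx y hy
      rw [sum_eq] at am_gm
      rw [← mul_pow]
      exact pow_le_pow_left₀ (mul_nonneg (a_nonneg x hx) (b_nonneg y hy)) (by linarith) 2
  rwa [setIntegral_one_add_mul_sq hKL.isCompact_left ha a_zero,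
    setIntegral_one_add_mul_sq hKL.isCompact_right hb b_zero,
    setIntegral_one_add_mul_sq hKL.isCompact_midpoints hc c_zero, hKL.measureReal_right,
    hKL.measureReal_midpoints] at key

theorem integral_sq_nonpos_of_sq_le_sub_sq (hKL : BrunnMinkowskiEquality μ K L)
    (hμ : MidpointPrekopaLeindler μ) (ha : Continuous a) (hb : Continuous b) (hc : Continuous c)
    (a_zero : ∫ x in K, a x ∂μ = 0) (b_zero : ∫ y in L, b y ∂μ = 0)
    (H : ∀ x ∈ K, ∀ y ∈ L, a x + b y = 2 * c (midpoint ℝ x y))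
    {d : E → ℝ} (hd : Continuous d) (d_le : ∀ x ∈ K, ∀ y ∈ L, d x ^ 2 ≤ (a x - b y) ^ 2) :
    ∫ x in K, d x ^ 2 ∂μ ≤ 0 := by
  -- The midpoints appear with the same term in both inequalities, up to sign, so it cancels.
  have lower := hKL.integral_sq_add_integral_sq_le hμ ha hb hc a_zero b_zero H
  have upper := hKL.integral_add_integral_le hμ (a := fun x => 2⁻¹ * d x ^ 2 - a x ^ 2)
    (b := fun y => -b y ^ 2) (c := fun z => -c z ^ 2) (by fun_prop) (by fun_prop) (by fun_prop)
    fun x hx y hy => by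
      have parallelogram : 2 * (2 * c (midpoint ℝ x y) ^ 2) + (a x - b y) ^ 2 =
          2 * (a x ^ 2 + b y ^ 2) := by
        linear_combination -(a x + b y + 2 * c (midpoint ℝ x y)) * H x hx y hy
      linarith [d_le x hx y hy]
  have sq_integrable {φ : E → ℝ} (hφ : Continuous φ) : IntegrableOn (fun x => φ x ^ 2) K μ :=
    (hφ.pow 2).continuousOn.integrableOn_compact hKL.isCompact_left
  rw [integral_sub ((sq_integrable hd).const_mul _) (sq_integrable ha), integral_const_mul,
    integral_neg, integral_neg] at upper
  linarith

theorem le_of_forall_le [μ.IsOpenPosMeasure] (hKL : BrunnMinkowskiEquality μ K L)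
    (hμ : MidpointPrekopaLeindler μ) (hK : K ⊆ closure (interior K))
    (ha : Continuous a) (hb : Continuous b) (hc : Continuous c)
    (a_zero : ∫ x in K, a x ∂μ = 0) (b_zero : ∫ y in L, b y ∂μ = 0)
    (H : ∀ x ∈ K, ∀ y ∈ L, a x + b y = 2 * c (midpoint ℝ x y))
    {β : ℝ} (b_le : ∀ y ∈ L, b y ≤ β) : ∀ x ∈ K, a x ≤ β := by
  set excess : E → ℝ := fun x => max (a x - β) 0
  have excess_cont : Continuous excess := by fun_prop
  have integral_excess_sq : ∫ x in K, excess x ^ 2 ∂μ = 0 := by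
    refine le_antisymm ?_ (integral_nonneg fun x => sq_nonneg _)
    refine hKL.integral_sq_nonpos_of_sq_le_sub_sq hμ ha hb hc a_zero b_zero H excess_cont
      fun x _ y hy => ?_
    rw [sq_le_sq, abs_of_nonneg (le_max_right _ _)]
    exact max_le ((sub_le_sub_left (b_le y hy) _).trans (le_abs_self _)) (abs_nonneg _)
  have excess_ae_zero : (fun x => excess x ^ 2) =ᵐ[μ.restrict (interior K)] fun _ => 0 :=
    ae_restrict_of_ae_restrict_of_subset interior_subset <|
      (integral_eq_zero_iff_of_nonneg (fun x => sq_nonneg (excess x)) <|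
        (excess_cont.pow 2).continuousOn.integrableOn_compact hKL.isCompact_left).1
        integral_excess_sq
  have excess_eqOn_zero : EqOn (fun x => excess x ^ 2) (fun _ => 0) (interior K) :=
    Measure.eqOn_open_of_ae_eq excess_ae_zero isOpen_interior (by fun_prop) (by fun_prop)
  intro x hx
  have excess_zero : excess x ^ 2 = 0 :=
    excess_eqOn_zero.closure (by fun_prop) (by fun_prop) (hK hx)
  exact sub_nonpos.1 ((le_max_left _ _).trans_eq (pow_eq_zero_iff two_ne_zero |>.1 excess_zero))

theorem average_sub_average_vadd_subset [CompleteSpace E] [μ.IsOpenPosMeasure]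
    (hKL : BrunnMinkowskiEquality μ K L) (hμ : MidpointPrekopaLeindler μ)
    (hK : K ⊆ closure (interior K)) (hL : Convex ℝ L) :
    ((⨍ y in L, y ∂μ) - ⨍ x in K, x ∂μ) +ᵥ K ⊆ L := by
  set p := ⨍ x in K, x ∂μ
  set q := ⨍ y in L, y ∂μ
  rw [vadd_set_subset_iff]
  intro x hx
  by_contra hxL
  obtain ⟨ℓ, u, ℓ_lt, lt_ℓ⟩ :=
    geometric_hahn_banach_closed_point hL hKL.isCompact_right.isClosed hxL
  have integral_centered {S : Set E} (hS : IsCompact S) :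
      ∫ y in S, ℓ (y - ⨍ z in S, z ∂μ) ∂μ = 0 := by
    have : IsFiniteMeasure (μ.restrict S) := isFiniteMeasure_restrict.2 hS.measure_ne_top
    rw [ℓ.integral_comp_comm, integral_sub_average, map_zero]
    exact Continuous.continuousOn (by fun_prop) |>.integrableOn_compact hS
  have le_on_K := hKL.le_of_forall_le hμ hK (a := fun x => ℓ (x - p)) (b := fun y => ℓ (y - q))
    (c := fun z => ℓ (z - midpoint ℝ p q)) (β := u - ℓ q) (by fun_prop) (by fun_prop)
    (by fun_prop) (integral_centered hKL.isCompact_left) (integral_centered hKL.isCompact_right)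
    (fun x _ y _ => by
      simp only [midpoint_eq_smul_add, map_sub, map_add, map_smul, invOf_eq_inv, smul_eq_mul]
      ring)
    (fun y hy => by simpa using (ℓ_lt y hy).le)
  have := le_on_K x hx
  simp only [vadd_eq_add, map_add, map_sub] at this lt_ℓ
  linarith

end BrunnMinkowskiEquality

section FiniteDimensional

variable {E : Type*} [NormedAddCommGroup E] [NormedSpace ℝ E] [FiniteDimensional ℝ E]
  [MeasurableSpace E] [BorelSpace E] {μ : Measure E} [μ.IsAddHaarMeasure] {K L : Set E}

theorem subset_closure_interior_of_convex_of_measure_ne_zero (hK : Convex ℝ K) (hμK : μ K ≠ 0) :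
    K ⊆ closure (interior K) := by
  have interior_nonempty : (interior K).Nonempty := by
    by_contra! interior_empty
    refine hμK (measure_mono_null ?_ (hK.addHaar_frontier μ))
    rw [frontier, interior_empty, sdiff_empty]
    exact subset_closure
  rw [hK.closure_interior_eq_closure_of_nonempty_interior interior_nonempty]
  exact subset_closure

theorem BrunnMinkowskiEquality.exists_eq_vadd (hKL : BrunnMinkowskiEquality μ K L)
    (hK : Convex ℝ K) (hL : Convex ℝ L) : ∃ v : E, L = v +ᵥ K := by
  have := FiniteDimensional.complete ℝ E
  have prekopaLeindler := MidpointPrekopaLeindler.of_isAddHaarMeasure μ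
  have subset_closure_interior_left : K ⊆ closure (interior K) :=
    subset_closure_interior_of_convex_of_measure_ne_zero hK hKL.measure_pos.ne'
  have subset_closure_interior_right : L ⊆ closure (interior L) :=
    subset_closure_interior_of_convex_of_measure_ne_zero hL hKL.symm.measure_pos.ne'
  refine ⟨(⨍ y in L, y ∂μ) - ⨍ x in K, x ∂μ, Subset.antisymm ?_ ?_⟩
  · rw [subset_vadd_set_iff, neg_sub]
    exact hKL.symm.average_sub_average_vadd_subset prekopaLeindler
      subset_closure_interior_right hK
  · exact hKL.average_sub_average_vadd_subset prekopaLeindler subset_closure_interior_left hL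

end FiniteDimensional

theorem forall_mem_iff_two_smul_sub_mem_iff_neg_eq_vadd {E : Type*} [AddCommGroup E] [Module ℝ E]
    {K : Set E} {p : E} : (∀ x, x ∈ K ↔ (2 : ℝ) • p - x ∈ K) ↔ -K = (-(2 : ℝ) • p) +ᵥ K := by
  rw [← neg_inj, neg_neg, Set.ext_iff]
  refine forall_congr' fun x => iff_congr Iff.rfl ?_
  rw [Set.mem_neg, mem_vadd_set_iff_neg_vadd_mem, vadd_eq_add, neg_smul, neg_neg, sub_eq_add_neg]

theorem inv_two_smul_add_neg_eq_vadd {E : Type*} [AddCommGroup E] [Module ℝ E] {K : Set E} {v : E}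
    (hK : Convex ℝ K) (hKv : -K = v +ᵥ K) :
    (2⁻¹ : ℝ) • (K + -K) = ((2⁻¹ : ℝ) • v) +ᵥ K := by
  have add_self : K + K = (2 : ℝ) • K := by
    rw [← one_add_one_eq_two, hK.add_smul zero_le_one zero_le_one, one_smul]
  rw [hKv, add_vadd_comm, add_self, ← singleton_vadd, vadd_eq_add, smul_add, smul_set_singleton,
    inv_smul_smul₀ two_ne_zero, ← vadd_eq_add, singleton_vadd]

theorem volume_eq_volume_central_symmetrization_iff_general {E : Type*} [NormedAddCommGroup E]
    [NormedSpace ℝ E] [FiniteDimensional ℝ E] [MeasurableSpace E] [BorelSpace E] (μ : Measure E)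
    [μ.IsAddHaarMeasure] {K : Set E} (hK_cpt : IsCompact K) (hK_conv : Convex ℝ K)
    (hK_int : (interior K).Nonempty) :
    μ K = μ ((2⁻¹ : ℝ) • (K + -K)) ↔ ∃ p : E, ∀ x, x ∈ K ↔ (2 : ℝ) • p - x ∈ K := by
  simp only [forall_mem_iff_two_smul_sub_mem_iff_neg_eq_vadd]
  constructor
  · intro measure_eq
    have equality : BrunnMinkowskiEquality μ K (-K) :=
      { isCompact_left := hK_cpt
        isCompact_right := hK_cpt.neg
        measure_pos := Measure.measure_pos_of_nonempty_interior μ hK_int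
        measure_right := Measure.measure_neg μ K
        measure_midpoints := measure_eq.symm }
    obtain ⟨v, hv⟩ := equality.exists_eq_vadd hK_conv hK_conv.neg
    exact ⟨-(2⁻¹ : ℝ) • v, by rw [hv]; congr 1; module⟩
  · rintro ⟨p, hp⟩
    rw [inv_two_smul_add_neg_eq_vadd hK_conv hp, measure_vadd]

/-- **Equality case of the symmetrization inequality**: a convex body `K` in `ℝⁿ`
has the same Lebesgue measure as its central symmetrization `(1/2) • (K + (-K))`
if and only if `K` is centrally symmetric with respect to some point `p`. -/
theorem volume_eq_volume_central_symmetrization_iff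
    {n : ℕ} (K : Set (EuclideanSpace ℝ (Fin n)))
    (hK_ne : K.Nonempty) (hK_cpt : IsCompact K) (hK_conv : Convex ℝ K)
    (hK_int : (interior K).Nonempty) :
    volume K = volume ((2⁻¹ : ℝ) • (K + -K)) ↔
      ∃ p : EuclideanSpace ℝ (Fin n), ∀ x, x ∈ K ↔ (2 : ℝ) • p - x ∈ K :=
  volume_eq_volume_central_symmetrization_iff_general volume hK_cpt hK_conv hK_int
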